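/- arXiv:1406.3974 — 2 statements merged into one kernel-verified Lean document; each statement's English description precedes it below -/
import Mathlib

section
/- Let u be an infinite word over a finite alphabet with p_u(n) ≤ C·n for all n ≥ 1, where C is a positive constant. Then there exist a constant B and languages S and T with p_S(n) ≤ B and p_T(n) ≤ B for all n ≥ 0, such that every factor of u belongs to S·T. -/
/-!
The factors of length `m` are listed by their first occurrences. Let `F m` be the set of positions
`i` at which the factor of length `m` starting at `i` has not occurred before; it has `p_u(m)`
elements, and `F m ⊆ F (m + 1)`. If `i + 1 ∈ F m` then `i ∈ F (m + 1)`, because an earlier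
occurrence of the factor of length `m + 1` at `i` would give an earlier occurrence of the factor of
length `m` at `i + 1`. Hence a maximal run of consecutive positions of `F m` starts either at `0`
or just after an element of `F (m + 1) \ F m`, so there are at most `p_u(m + 1) - p_u(m) + 1` runs,
each of length at most `p_u(m)` (`exists_run_starts`).

By linearity of `p_u`, every interval `[8q, 16q)` contains some `m` with
`p_u(m + 1) ≤ p_u(m) + 2C` (`exists_small_increment`). For that `m` the runs are boundedly many and
have length at most `16Cq`, so placing cut points at distance `q` along each of them gives a set
`Q` of boundedly many positions such that each factor of length less than `8q` has an
occurrence starting at distance between `q` and `2q` to the left of a point of `Q`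
(`exists_cut_points`).

A factor of length in `[4q, 8q)`, `q = 2 ^ k`, is then cut at such a point. Its two parts are
determined by the cut point, the scale `k` and their lengths, and their lengths, being of order `q`,
leave at most two possibilities for `k`. Thus each length carries boundedly many left and right
parts.
-/

/-- The factor of the infinite word `u` of length `n` starting at position `i`. -/
def wordSeg {α : Type*} (u : ℕ → α) (i n : ℕ) : List α :=
  (List.range n).map (fun t => u (i + t))

/-- The set of (finite) factors of the infinite word `u`. -/
def Factors {α : Type*} (u : ℕ → α) : Set (List α) :=
  {w | ∃ i, w = wordSeg u i w.length}

/-- Subword complexity: the number of distinct factors of `u` of length `n`. -/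
noncomputable def complexity {α : Type*} (u : ℕ → α) (n : ℕ) : ℕ :=
  {w : List α | w.length = n ∧ w ∈ Factors u}.ncard

/-- `p_L(n)`: the number of words of length `n` in the language `L`. -/
noncomputable def langComplexity {α : Type*} (L : Set (List α)) (n : ℕ) : ℕ :=
  {w ∈ L | w.length = n}.ncard

section FirstOccurrences

variable {α : Type*}

theorem length_wordSeg (u : ℕ → α) (i n : ℕ) : (wordSeg u i n).length = n := by
  simp [wordSeg]

theorem wordSeg_mem_Factors (u : ℕ → α) (i n : ℕ) : wordSeg u i n ∈ Factors u :=
  ⟨i, by rw [length_wordSeg]⟩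

theorem wordSeg_eq_iff (u : ℕ → α) (i j n : ℕ) :
    wordSeg u i n = wordSeg u j n ↔ ∀ t < n, u (i + t) = u (j + t) := by
  simp [wordSeg]

theorem wordSeg_add (u : ℕ → α) (i a b : ℕ) :
    wordSeg u i (a + b) = wordSeg u i a ++ wordSeg u (i + a) b := by
  simp [wordSeg, List.range_add, Function.comp_def, add_assoc]

/-- The positions at which a factor of `u` of length `m` occurs for the first time. -/
def firstOcc (u : ℕ → α) (m : ℕ) : Set ℕ :=
  {i | ∀ j < i, wordSeg u j m ≠ wordSeg u i m}

theorem exists_firstOcc (u : ℕ → α) (m i : ℕ) :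
    ∃ j ∈ firstOcc u m, wordSeg u j m = wordSeg u i m := by
  classical
  have h : ∃ j, wordSeg u j m = wordSeg u i m := ⟨i, rfl⟩
  refine ⟨Nat.find h, fun j hj hj' => ?_, Nat.find_spec h⟩
  exact Nat.find_min h hj (hj'.trans (Nat.find_spec h))

theorem injOn_firstOcc (u : ℕ → α) (m : ℕ) :
    Set.InjOn (fun i => wordSeg u i m) (firstOcc u m) := by
  intro i hi j hj hij
  rcases lt_trichotomy i j with h | h | h
  · exact absurd hij (hj i h)
  · exact h
  · exact absurd hij.symm (hi j h)

theorem image_firstOcc (u : ℕ → α) (m : ℕ) :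
    Set.image (fun i => wordSeg u i m) (firstOcc u m) = {w | w.length = m ∧ w ∈ Factors u} := by
  ext w
  constructor
  · rintro ⟨i, -, rfl⟩
    exact ⟨length_wordSeg u i m, wordSeg_mem_Factors u i m⟩
  · rintro ⟨rfl, i, hi⟩
    obtain ⟨j, hj, hji⟩ := exists_firstOcc u w.length i
    exact ⟨j, hj, hji.trans hi.symm⟩

theorem ncard_firstOcc (u : ℕ → α) (m : ℕ) : (firstOcc u m).ncard = complexity u m := by
  rw [complexity, ← image_firstOcc, (injOn_firstOcc u m).ncard_image]

theorem finite_factors [Finite α] (u : ℕ → α) (m : ℕ) :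
    {w : List α | w.length = m ∧ w ∈ Factors u}.Finite :=
  (List.finite_length_eq α m).subset fun _ hw => hw.1

theorem finite_firstOcc [Finite α] (u : ℕ → α) (m : ℕ) : (firstOcc u m).Finite := by
  refine Set.Finite.of_finite_image ?_ (injOn_firstOcc u m)
  rw [image_firstOcc]
  exact finite_factors u m

theorem firstOcc_subset_succ (u : ℕ → α) (m : ℕ) : firstOcc u m ⊆ firstOcc u (m + 1) := by
  intro i hi j hj h
  rw [wordSeg_eq_iff] at h
  exact hi j hj ((wordSeg_eq_iff u j i m).2 fun t ht => h t (by omega))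

/-- An earlier occurrence of the factor of length `m + 1` at `i` yields one of the factor of
length `m` at `i + 1`, on dropping the first letter. -/
theorem mem_firstOcc_of_succ_mem (u : ℕ → α) (m i : ℕ) (h : i + 1 ∈ firstOcc u m) :
    i ∈ firstOcc u (m + 1) := by
  intro j hj hji
  rw [wordSeg_eq_iff] at hji
  refine h (j + 1) (by omega) ((wordSeg_eq_iff u _ _ m).2 fun t ht => ?_)
  have := hji (t + 1) (by omega)
  rwa [show j + (t + 1) = j + 1 + t by ring, show i + (t + 1) = i + 1 + t by ring] at this

/-- The first occurrences of the factors of length `m` are covered by few intervals: `E` consists of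
the possible left endpoints of the runs of consecutive first occurrences. -/
theorem exists_run_starts [Finite α] (u : ℕ → α) (m D : ℕ)
    (hD : complexity u (m + 1) ≤ complexity u m + D) :
    ∃ E : Finset ℕ, E.card ≤ D + 1 ∧
      ∀ i ∈ firstOcc u m, ∃ e ∈ E, e ≤ i ∧ i < e + complexity u m := by
  classical
  have hfin : (firstOcc u (m + 1) \ firstOcc u m).Finite := (finite_firstOcc u (m + 1)).sdiff
  refine ⟨insert 0 (hfin.toFinset.image (· + 1)), ?_, fun i hi => ?_⟩
  · refine (Finset.card_insert_le _ _).trans (Nat.succ_le_succ (Finset.card_image_le.trans ?_))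
    rw [← Set.ncard_eq_toFinset_card _ hfin,
      Set.ncard_sdiff (firstOcc_subset_succ u m) (finite_firstOcc u m), ncard_firstOcc,
      ncard_firstOcc]
    omega
  · -- `e` is the left endpoint of the run containing `i`.
    have hex : ∃ e, e ≤ i ∧ ∀ j, e ≤ j → j ≤ i → j ∈ firstOcc u m :=
      ⟨i, le_rfl, fun j h₁ h₂ => by rwa [le_antisymm h₂ h₁]⟩
    set e := Nat.find hex with he
    obtain ⟨hei, hrun⟩ := Nat.find_spec hex
    refine ⟨e, ?_, hei, ?_⟩
    · rcases Nat.eq_zero_or_pos e with h0 | hpos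
      · rw [h0]; exact Finset.mem_insert_self _ _
      · refine Finset.mem_insert_of_mem (Finset.mem_image.2 ⟨e - 1, ?_, by omega⟩)
        rw [Set.Finite.mem_toFinset]
        refine ⟨mem_firstOcc_of_succ_mem u m _ ?_, fun hmem => ?_⟩
        · rw [Nat.sub_add_cancel hpos]; exact hrun e le_rfl hei
        · refine Nat.find_min hex (m := e - 1) (by omega) ⟨by omega, fun j h₁ h₂ => ?_⟩
          rcases Nat.eq_or_lt_of_le h₁ with h | h
          · rwa [← h]
          · exact hrun j (by omega) h₂
    · have hsub : (Finset.Icc e i : Set ℕ) ⊆ firstOcc u m := fun j hj => by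
        rw [Finset.coe_Icc] at hj
        exact hrun j hj.1 hj.2
      have hcard := Set.ncard_le_ncard hsub (finite_firstOcc u m)
      rw [Set.ncard_coe_finset, Nat.card_Icc, ncard_firstOcc] at hcard
      omega

end FirstOccurrences

section LinearComplexity

variable {α : Type*}

/-- If every increment on `[8q, 16q)` were at least `2C + 1`, then `p_u(16q) ≥ 8q(2C + 1) > 16Cq`. -/
theorem exists_small_increment (u : ℕ → α) (C : ℕ)
    (hp : ∀ n, 1 ≤ n → complexity u n ≤ C * n) (q : ℕ) (hq : 0 < q) :
    ∃ m, 8 * q ≤ m ∧ m < 16 * q ∧ complexity u (m + 1) ≤ complexity u m + 2 * C := by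
  by_contra! hcon
  have key : ∀ d ≤ 8 * q, d * (2 * C + 1) ≤ complexity u (8 * q + d) := by
    intro d
    induction d with
    | zero => simp
    | succ d ih =>
      intro hd
      have h₁ := ih (by omega)
      have h₂ := hcon (8 * q + d) (by omega) (by omega)
      rw [← add_assoc, add_mul]
      omega
  have h₁ := key (8 * q) le_rfl
  have h₂ := hp (8 * q + 8 * q) (by omega)
  nlinarith

theorem exists_cut_points [Finite α] (u : ℕ → α) (C : ℕ)
    (hp : ∀ n, 1 ≤ n → complexity u n ≤ C * n) (q : ℕ) (hq : 0 < q) :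
    ∃ Q : Finset ℕ, Q.card ≤ (2 * C + 1) * (16 * C) ∧
      ∀ w ∈ Factors u, w.length < 8 * q →
        ∃ i, ∃ c ∈ Q, w = wordSeg u i w.length ∧ i + q < c ∧ c ≤ i + 2 * q := by
  classical
  obtain ⟨m, hm₁, hm₂, hm⟩ := exists_small_increment u C hp q hq
  obtain ⟨E, hE, hcov⟩ := exists_run_starts u m (2 * C) hm
  refine ⟨(E ×ˢ Finset.range (16 * C)).image fun x => x.1 + (x.2 + 2) * q, ?_, ?_⟩
  · refine Finset.card_image_le.trans ?_
    rw [Finset.card_product, Finset.card_range]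
    exact Nat.mul_le_mul_right _ hE
  · rintro w ⟨i₀, hw⟩ hlen
    -- The factor of length `m` extending `w` to the right is located by its first occurrence.
    obtain ⟨i, hi, hii₀⟩ := exists_firstOcc u m i₀
    obtain ⟨e, heE, hei, hie⟩ := hcov i hi
    have hdiv := Nat.div_add_mod (i - e) q
    have hmod := Nat.mod_lt (i - e) hq
    refine ⟨i, e + ((i - e) / q + 2) * q, ?_, ?_, ?_, ?_⟩
    · refine Finset.mem_image.2 ⟨(e, (i - e) / q), ?_, rfl⟩
      refine Finset.mem_product.2 ⟨heE, Finset.mem_range.2 ?_⟩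
      rw [Nat.div_lt_iff_lt_mul hq]
      have h₁ := hp m (by omega)
      have h₂ : C * m ≤ C * (16 * q) := Nat.mul_le_mul_left _ hm₂.le
      have h₃ : C * (16 * q) = 16 * C * q := by ring
      omega
    · rw [wordSeg_eq_iff] at hii₀
      refine hw.trans ((wordSeg_eq_iff u _ _ _).2 fun t ht => (hii₀ t (by omega)).symm)
    · rw [add_mul, mul_comm _ q]
      omega
    · rw [add_mul, mul_comm _ q]
      omega

end LinearComplexity

/-- if `p_u(n) ≤ C·n` for all `n ≥ 1` (`C > 0`), then there are a constant `B`
and languages `S`, `T` with `p_S(n) ≤ B`, `p_T(n) ≤ B` for all `n`, such that every factor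
of `u` lies in `S·T`. -/
theorem stmt2 {α : Type*} [Fintype α] (u : ℕ → α) (C : ℕ) (hC : 0 < C)
    (hp : ∀ n, 1 ≤ n → complexity u n ≤ C * n) :
    ∃ (B : ℕ) (S T : Set (List α)),
      (∀ n, langComplexity S n ≤ B) ∧ (∀ n, langComplexity T n ≤ B) ∧
      ∀ w ∈ Factors u, ∃ s ∈ S, ∃ t ∈ T, w = s ++ t := by
  classical
  choose Q hQ hcut using fun k : ℕ => exists_cut_points u C hp (2 ^ k) (by positivity)
  set K := (2 * C + 1) * (16 * C) with hK
  -- Factors of length at most `3` are too short to be cut at scale `2 ^ 0`: the left part is empty.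
  refine ⟨3 * C + 1 + K + K,
    {s | s = [] ∨ ∃ k, ∃ c ∈ Q k, 2 ^ k < s.length ∧ s.length ≤ 2 ^ (k + 1) ∧
      s = wordSeg u (c - s.length) s.length},
    {t | (t.length ≤ 3 ∧ t ∈ Factors u) ∨ ∃ k, ∃ c ∈ Q k, 2 ^ (k + 1) ≤ t.length ∧
      t.length < 2 ^ (k + 3) ∧ t = wordSeg u c t.length},
    fun n => ?_, fun n => ?_, fun w hw => ?_⟩
  · have hsub : {s ∈ {s : List α | s = [] ∨ ∃ k, ∃ c ∈ Q k, 2 ^ k < s.length ∧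
        s.length ≤ 2 ^ (k + 1) ∧ s = wordSeg u (c - s.length) s.length} | s.length = n} ⊆
        ((insert [] ((Q (Nat.log 2 (n - 1))).image fun c => wordSeg u (c - n) n) :
          Finset (List α)) : Set (List α)) := by
      rintro s ⟨rfl | ⟨k, c, hc, h₁, h₂, hs⟩, hn⟩
      · simp
      · rw [hn] at h₁ h₂ hs
        have hk : Nat.log 2 (n - 1) = k :=
          Nat.log_eq_of_pow_le_of_lt_pow (by omega) (by omega)
        rw [hk, Finset.mem_coe]
        exact Finset.mem_insert_of_mem (Finset.mem_image.2 ⟨c, hc, hs.symm⟩)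
    have hcard := Set.ncard_le_ncard hsub (Finset.finite_toSet _)
    rw [Set.ncard_coe_finset] at hcard
    refine hcard.trans ((Finset.card_insert_le _ _).trans ?_)
    have := (Finset.card_image_le (s := Q (Nat.log 2 (n - 1)))
      (f := fun c => wordSeg u (c - n) n)).trans (hQ _)
    omega
  · -- The length of a right part leaves two possible scales.
    set T₁ : Finset (List α) := (Q (Nat.log 2 n - 1)).image fun c => wordSeg u c n with hT₁
    set T₂ : Finset (List α) := (Q (Nat.log 2 n - 2)).image fun c => wordSeg u c n with hT₂
    have hT₁c : T₁.card ≤ K := Finset.card_image_le.trans (hQ _)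
    have hT₂c : T₂.card ≤ K := Finset.card_image_le.trans (hQ _)
    set T₀ : Set (List α) := {t | n ≤ 3 ∧ t.length = n ∧ t ∈ Factors u} with hT₀
    have hT₀f : T₀.Finite := (finite_factors u n).subset fun t ht => ht.2
    have hT₀c : T₀.ncard ≤ 3 * C + 1 := by
      rcases Nat.eq_zero_or_pos n with rfl | hn
      · refine (Set.ncard_le_ncard (t := {[]}) ?_ (Set.finite_singleton _)).trans ?_
        · rintro t ⟨-, ht, -⟩
          exact List.length_eq_zero_iff.1 ht
        · rw [Set.ncard_singleton]; omega
      · by_cases h3 : n ≤ 3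
        · have h₁ : T₀.ncard ≤ complexity u n :=
            Set.ncard_le_ncard (fun t ht => ht.2) (finite_factors u n)
          have h₂ := hp n hn
          nlinarith
        · have : T₀ = ∅ := Set.eq_empty_of_forall_notMem fun t ht => h3 ht.1
          simp [this]
    have hsub : {t ∈ {t : List α | (t.length ≤ 3 ∧ t ∈ Factors u) ∨ ∃ k, ∃ c ∈ Q k,
        2 ^ (k + 1) ≤ t.length ∧ t.length < 2 ^ (k + 3) ∧ t = wordSeg u c t.length} |
        t.length = n} ⊆ T₀ ∪ T₁ ∪ T₂ := by
      rintro t ⟨⟨h3, ht⟩ | ⟨k, c, hc, h₁, h₂, ht⟩, hn⟩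
      · exact Or.inl (Or.inl ⟨hn ▸ h3, hn, ht⟩)
      · rw [hn] at h₁ h₂ ht
        rcases lt_or_ge n (2 ^ (k + 2)) with h | h
        · have hk : Nat.log 2 n = k + 1 := Nat.log_eq_of_pow_le_of_lt_pow h₁ h
          refine Or.inl (Or.inr (Finset.mem_coe.2 (Finset.mem_image.2 ⟨c, ?_, ht.symm⟩)))
          rwa [hk]
        · have hk : Nat.log 2 n = k + 2 := Nat.log_eq_of_pow_le_of_lt_pow h h₂
          refine Or.inr (Finset.mem_coe.2 (Finset.mem_image.2 ⟨c, ?_, ht.symm⟩))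
          rwa [hk]
    refine (Set.ncard_le_ncard hsub
      ((hT₀f.union T₁.finite_toSet).union T₂.finite_toSet)).trans ?_
    have h₁ := Set.ncard_union_le (T₀ ∪ T₁) T₂
    have h₂ := Set.ncard_union_le T₀ T₁
    rw [Set.ncard_coe_finset] at h₁ h₂
    omega
  · by_cases h3 : w.length ≤ 3
    · exact ⟨[], Or.inl rfl, w, Or.inl ⟨h3, hw⟩, rfl⟩
    · -- The scale `k` is such that `4 * 2 ^ k ≤ w.length < 8 * 2 ^ k`.
      obtain ⟨k, hk⟩ : ∃ k, Nat.log 2 w.length = k + 2 := by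
        have : 2 ≤ Nat.log 2 w.length := Nat.le_log_of_pow_le (by norm_num) (by omega)
        exact ⟨Nat.log 2 w.length - 2, by omega⟩
      have hlo : 2 ^ (k + 2) ≤ w.length := hk ▸ Nat.pow_log_le_self 2 (by omega)
      have hhi : w.length < 2 ^ (k + 3) := by
        have := Nat.lt_pow_succ_log_self (b := 2) (by norm_num) w.length
        rwa [hk] at this
      have e₁ : 2 ^ (k + 1) = 2 * 2 ^ k := by ring
      have e₂ : 2 ^ (k + 2) = 4 * 2 ^ k := by ring
      have e₃ : 2 ^ (k + 3) = 8 * 2 ^ k := by ring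
      obtain ⟨i, c, hc, hwi, h₁, h₂⟩ := hcut k w hw (by omega)
      refine ⟨wordSeg u i (c - i), Or.inr ⟨k, c, hc, ?_⟩,
        wordSeg u c (w.length - (c - i)), Or.inr ⟨k, c, hc, ?_⟩, ?_⟩
      · rw [length_wordSeg, show c - (c - i) = i by omega]
        exact ⟨by omega, by omega, rfl⟩
      · rw [length_wordSeg]
        exact ⟨by omega, by omega, rfl⟩
      · have h := wordSeg_add u i (c - i) (w.length - (c - i))
        rw [show c - i + (w.length - (c - i)) = w.length by omega,
          show i + (c - i) = c by omega] at h
        exact hwi.trans h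
end

section
/- Let u be an infinite word, let v = u[i+1..i+n] be an occurrence of a factor v of length n in u, and let m be a factor of v that occurs in u[i+1..i+n]. If every occurrence of m inside u[i+1..i+n] is internal, then v is p(m)-periodic, i.e., v_h = v_{h+p(m)} for all 1 ≤ h ≤ n − p(m). -/
/-- The minimal period `p(w)` of a finite word `w`: the least `p > 0` such that
`w_i = w_{i+p}` whenever both indices are within `w` (here 0-based). -/
noncomputable def minPeriod {α : Type*} (w : List α) : ℕ :=
  sInf {p | 0 < p ∧ ∀ i, i + p < w.length → w[i]? = w[i + p]?}

/-- The occurrence of `m` at (0-based) position `j` of `u` is internal: around the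
occurrence, `u` continues `p(m)`-periodically on both sides (within the word `u`). -/
def InternalOcc {α : Type*} (u : ℕ → α) (m : List α) (j : ℕ) : Prop :=
  wordSeg u j m.length = m ∧
  (∀ t, t < minPeriod m → minPeriod m ≤ j + t → u (j + t) = u (j + t - minPeriod m)) ∧
  (∀ t, m.length - minPeriod m ≤ t → t < m.length → u (j + t) = u (j + t + minPeriod m))

theorem minPeriod_spec {α : Type*} {m : List α} (hm : m ≠ []) :
    0 < minPeriod m ∧ ∀ i, i + minPeriod m < m.length → m[i]? = m[i + minPeriod m]? :=
  Nat.sInf_mem (s := {p | 0 < p ∧ ∀ i, i + p < m.length → m[i]? = m[i + p]?})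
    ⟨m.length, List.length_pos_of_ne_nil hm, fun i hi => by omega⟩

theorem minPeriod_le_length {α : Type*} {m : List α} (hm : m ≠ []) :
    minPeriod m ≤ m.length :=
  Nat.sInf_le ⟨List.length_pos_of_ne_nil hm, fun i hi => by omega⟩

theorem wordSeg_congr {α : Type*} {u : ℕ → α} {j k n : ℕ}
    (h : ∀ t, t < n → u (j + t) = u (k + t)) : wordSeg u j n = wordSeg u k n :=
  List.map_congr_left fun t ht => h t (List.mem_range.1 ht)

theorem getElem?_of_occ {α : Type*} {u : ℕ → α} {m : List α} {j t : ℕ}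
    (h : wordSeg u j m.length = m) (ht : t < m.length) : m[t]? = some (u (j + t)) := by
  conv_lhs => rw [← h]
  simp [wordSeg, ht]

/-- Inside an occurrence of `m`, the word `u` inherits the period of `m`. -/
theorem periodic_of_occ {α : Type*} {u : ℕ → α} {m : List α} (hm : m ≠ []) {j t : ℕ}
    (h : wordSeg u j m.length = m) (ht : t + minPeriod m < m.length) :
    u (j + t) = u (j + t + minPeriod m) := by
  have key := (minPeriod_spec hm).2 t ht
  rw [getElem?_of_occ h (by omega), getElem?_of_occ h ht, ← Nat.add_assoc] at key
  exact Option.some.inj key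

theorem InternalOcc.periodic {α : Type*} {u : ℕ → α} {m : List α} (hm : m ≠ []) {j t : ℕ}
    (h : InternalOcc u m j) (ht : t < m.length) : u (j + t) = u (j + t + minPeriod m) := by
  by_cases hlt : t + minPeriod m < m.length
  · exact periodic_of_occ hm h.1 hlt
  · exact h.2.2 t (by omega) ht

theorem InternalOcc.shift_right {α : Type*} {u : ℕ → α} {m : List α} (hm : m ≠ []) {j : ℕ}
    (h : InternalOcc u m j) : wordSeg u (j + minPeriod m) m.length = m := by
  refine (wordSeg_congr fun t ht => ?_).trans h.1
  rw [h.periodic hm ht, Nat.add_right_comm]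

theorem InternalOcc.shift_left {α : Type*} {u : ℕ → α} {m : List α} (hm : m ≠ []) {j : ℕ}
    (h : InternalOcc u m j) (hj : minPeriod m ≤ j) :
    wordSeg u (j - minPeriod m) m.length = m := by
  refine (wordSeg_congr fun t ht => ?_).trans h.1
  by_cases hlt : t < minPeriod m
  · rw [h.2.1 t hlt (by omega)]
    congr 1
    omega
  · have key := periodic_of_occ hm h.1 (t := t - minPeriod m) (by omega)
    rw [show j - minPeriod m + t = j + (t - minPeriod m) by omega, key]
    congr 1
    omega

theorem periodic_right {α : Type*} {u : ℕ → α} {i n : ℕ} {m : List α} (hm : m ≠ [])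
    (hint : ∀ j, i ≤ j → j + m.length ≤ i + n → wordSeg u j m.length = m →
      InternalOcc u m j) (x : ℕ) (hx : x + minPeriod m < i + n) (j : ℕ) (hij : i ≤ j)
    (hjn : j + m.length ≤ i + n) (hocc : wordSeg u j m.length = m) (hjx : j ≤ x) :
    u x = u (x + minPeriod m) := by
  have hpos := (minPeriod_spec hm).1
  have hle := minPeriod_le_length hm
  have hI := hint j hij hjn hocc
  by_cases hlt : x < j + m.length
  · have key := hI.periodic hm (t := x - j) (by omega)
    rwa [Nat.add_sub_cancel' hjx] at key
  · exact periodic_right hm hint x hx (j + minPeriod m) (by omega) (by omega)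
      (hI.shift_right hm) (by omega)
termination_by x - j

theorem periodic_left {α : Type*} {u : ℕ → α} {i n : ℕ} {m : List α} (hm : m ≠ [])
    (hint : ∀ j, i ≤ j → j + m.length ≤ i + n → wordSeg u j m.length = m →
      InternalOcc u m j) (x : ℕ) (hix : i ≤ x) (j : ℕ)
    (hjn : j + m.length ≤ i + n) (hocc : wordSeg u j m.length = m) (hxj : x < j) :
    u x = u (x + minPeriod m) := by
  have hpos := (minPeriod_spec hm).1
  have hI := hint j (by omega) hjn hocc
  by_cases hlt : j ≤ x + minPeriod m
  · have key := hI.2.1 (x + minPeriod m - j) (by omega) (by omega)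
    rw [Nat.add_sub_cancel' hlt, Nat.add_sub_cancel] at key
    exact key.symm
  · exact periodic_left hm hint x hix (j - minPeriod m) (by omega)
      (hI.shift_left hm (by omega)) (by omega)
termination_by j

/-- if `v = u[i..i+n)` is an occurrence of a factor `v` in `u`, `m` occurs in
`u[i..i+n)`, and every occurrence of `m` inside `u[i..i+n)` is internal, then `v` is
`p(m)`-periodic. -/
theorem stmt9 {α : Type*} (u : ℕ → α) (i n : ℕ) (v m : List α) (hm : m ≠ [])
    (hv : v = wordSeg u i n)
    (hocc : ∃ j, i ≤ j ∧ j + m.length ≤ i + n ∧ wordSeg u j m.length = m)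
    (hint : ∀ j, i ≤ j → j + m.length ≤ i + n → wordSeg u j m.length = m →
      InternalOcc u m j) :
    ∀ h, h + minPeriod m < n → u (i + h) = u (i + h + minPeriod m) := by
  intro h hh
  obtain ⟨j, hij, hjn, hj⟩ := hocc
  rcases le_or_gt j (i + h) with hle | hlt
  · exact periodic_right hm hint (i + h) (by omega) j hij hjn hj hle
  · exact periodic_left hm hint (i + h) (by omega) j hjn hj hlt
end
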